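/- The space C^r(𝒪_F,E) is an E-Banach algebra: if f, g ∈ C^r(𝒪_F,E), then the pointwise product fg belongs to C^r(𝒪_F,E), with ‖fg‖_{C^r} ≤ ‖f‖_{C^r}·‖g‖_{C^r}, and for every k ∈ I_{≤[r]} one has D_k(fg) = Σ_{i+j=k} (k choose i) · D_i f · D_j g, where (k choose i) = k!/(i!·(k−i)!). -/

import Mathlib

/-!
Setting (cf. the paper's notations): `O` plays the role of the ring of integers `𝒪_F` of a
finite extension `F` of `ℚ_p`, `E` is the coefficient field (a finite extension of `ℚ_p`
with its p-adic absolute value, normalized by `|x| = p^{-val_F(x)}`, `val_F(p) = [F:ℚ_p]`),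
`S` is the (finite) set of `ℚ_p`-algebra embeddings `F ↪ E`, restricted here to `O`,
`ν : O → ℝ` is the absolute value on `O` (the common restriction of the norm of `E` along any
embedding), `ϖ` is a fixed uniformizer with `ν ϖ = q⁻¹` where `q = p^f` is the cardinality
of the residue field, and `u * ϖ ^ e = p` records the ramification index `e`.
-/

open scoped Classical

noncomputable section

namespace CrPaper

structure Setting (S O E : Type*) [Fintype S] [CommRing O] [NormedField E] where
  q : ℝ
  p : ℕ
  fdeg : ℕ
  hp : p.Prime
  hfdeg : 0 < fdeg
  hq : q = (p : ℝ) ^ fdeg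
  emb : S → O →+* E
  emb_inj : ∀ s, Function.Injective (emb s)
  emb_distinct : Function.Injective emb
  ν : O → ℝ
  norm_emb : ∀ (s) (z : O), ‖emb s z‖ = ν z
  norm_le_one : ∀ (s) (z : O), ‖emb s z‖ ≤ 1
  norm_add_max : ∀ x y : E, ‖x + y‖ ≤ max ‖x‖ ‖y‖
  ϖ : O
  ν_ϖ : ν ϖ = q⁻¹
  mem_ball_iff : ∀ (y : O) (n : ℕ), (∃ z, y = ϖ ^ n * z) ↔ ν y ≤ q⁻¹ ^ n
  ram : ∃ (e : ℕ) (u : O), 0 < e ∧ IsUnit u ∧ u * ϖ ^ e = (p : O)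

variable {S O E : Type*} [Fintype S] [DecidableEq S] [CommRing O] [IsDomain O]
  [NormedField E] [CompleteSpace E] [CharZero E]

/-- The total weight `|i| = ∑ i_σ` of a multi-index. -/
def wt (i : S → ℕ) : ℕ := ∑ s, i s

/-- `i! = ∏ i_σ!` for a multi-index. -/
def mfact (i : S → ℕ) : ℕ := ∏ s, (i s).factorial

/-- The (finite) set `I_{≤N}` of multi-indices of total weight `≤ N`. -/
def Idx (S : Type*) [Fintype S] [DecidableEq S] (N : ℕ) : Finset (S → ℕ) :=
  (Fintype.piFinset fun _ : S => Finset.range (N + 1)).filter fun i => wt i ≤ N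

/-- `z^i = ∏_σ σ(z)^{i_σ}`. -/
def mpow (St : Setting S O E) (z : O) (i : S → ℕ) : E := ∏ s, St.emb s z ^ i s

/-- The Taylor remainder `ε_{f,N}(x,y) = f(x+y) − ∑_{|i|≤N} D_i f(x) y^i / i!`. -/
def epsTay (St : Setting S O E) (N : ℕ) (f : O → E) (D : (S → ℕ) → O → E) (x y : O) : E :=
  f (x + y) - ∑ i ∈ Idx S N, D i x * mpow St y i / (mfact i : E)

/-- `f` is of class `C^r` with the family of bounded functions `D` witnessing the
definition: all `D_i` (`|i| ≤ ⌊r⌋`) are bounded and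
`C_{f,r}(h) = sup_{x ∈ O, y ∈ ϖ^h O} |ε_{f,⌊r⌋}(x,y)| q^{rh} → 0` as `h → ∞`. -/
def IsCrWith (St : Setting S O E) (r : ℝ) (f : O → E) (D : (S → ℕ) → O → E) : Prop :=
  (∀ i ∈ Idx S ⌊r⌋₊, ∃ C : ℝ, ∀ x : O, ‖D i x‖ ≤ C) ∧
  ∀ ε : ℝ, 0 < ε → ∃ M : ℕ, ∀ h : ℕ, M ≤ h → ∀ x z : O,
    ‖epsTay St ⌊r⌋₊ f D x (St.ϖ ^ h * z)‖ * St.q ^ (r * (h : ℝ)) ≤ ε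

/-- `f` is of class `C^r`. -/
def IsCr (St : Setting S O E) (r : ℝ) (f : O → E) : Prop :=
  ∃ D, IsCrWith St r f D

/-- The `C^r`-norm of `f` (relative to the — unique — family `D`):
`max( sup_{i,x} |D_i f(x)/i!| , sup_{x,y} |ε_{f,⌊r⌋}(x,y)|/|y|^r )`. -/
def CrNorm (St : Setting S O E) (r : ℝ) (f : O → E) (D : (S → ℕ) → O → E) : ℝ :=
  max (⨆ i : (Idx S ⌊r⌋₊), ⨆ x : O, ‖D i.1 x / (mfact i.1 : E)‖)
      (⨆ x : O, ⨆ y : O, ‖epsTay St ⌊r⌋₊ f D x y‖ / St.ν y ^ r)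

/-- The multinomial coefficient `(k choose i) = k!/(i!(k−i)!)`. -/
def mchoose (k i : S → ℕ) : ℕ := ∏ s, (k s).choose (i s)

/-!
Divide the derivatives by factorials, `a_i = D_i f / i!` and `b_j = D_j g / j!`. The Leibniz rule
then says that the coefficients of the product are the Cauchy products `c_k = ∑_{i+j=k} a_i b_j`.
Writing `T` for Taylor polynomials of degree `N = ⌊r⌋`, the remainder of the product is
`ε_{fg}(x,y) = ε_f(x,y) g(x+y) + T_f(x,y) ε_g(x,y) + (T_f T_g - T_{fg})(x,y)`.
All terms of `T_f T_g - T_{fg}` have degree at least `N + 1 > r` in `y`, so the ultrametric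
inequality bounds it by `‖f‖ ‖g‖ |y|^(N+1)`, which is `o(|y|^r)` and at most `‖f‖ ‖g‖ |y|^r`.
The other two terms have the same two properties because `|g| ≤ ‖g‖` and `|T_f| ≤ ‖f‖`.
-/

theorem ciSup_ciSup_le_iff {ι κ α : Type*} [ConditionallyCompleteLattice α] [Nonempty ι]
    [Nonempty κ] {F : ι → κ → α} {C a : α} (hF : ∀ i j, F i j ≤ C) :
    ⨆ i, ⨆ j, F i j ≤ a ↔ ∀ i j, F i j ≤ a := by
  have hbdd : BddAbove (Set.range fun p : ι × κ => F p.1 p.2) :=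
    ⟨C, Set.forall_mem_range.2 fun p => hF p.1 p.2⟩
  rw [← ciSup_prod hbdd, ciSup_le_iff hbdd, Prod.forall]

section MultiIndex

theorem mem_Idx {N : ℕ} {i : S → ℕ} : i ∈ Idx S N ↔ wt i ≤ N := by
  refine ⟨fun h => (Finset.mem_filter.1 h).2, fun h => Finset.mem_filter.2 ⟨?_, h⟩⟩
  refine Fintype.mem_piFinset.2 fun s => Finset.mem_range_succ_iff.2 ?_
  exact (Finset.single_le_sum_of_canonicallyOrdered (Finset.mem_univ s)).trans h

theorem zero_mem_Idx (N : ℕ) : (0 : S → ℕ) ∈ Idx S N := by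
  simp [mem_Idx, wt]

theorem mem_Idx_of_le {N : ℕ} {i k : S → ℕ} (hik : i ≤ k) (hk : k ∈ Idx S N) : i ∈ Idx S N :=
  mem_Idx.2 ((Finset.sum_le_sum fun s _ => hik s).trans (mem_Idx.1 hk))

theorem sum_Idx_sum_Iic {M : Type*} [AddCommMonoid M] (N : ℕ) (F : (S → ℕ) → (S → ℕ) → M) :
    ∑ k ∈ Idx S N, ∑ i ∈ Finset.Iic k, F i (k - i) =
      ∑ ij ∈ Idx S N ×ˢ Idx S N with ij.1 + ij.2 ∈ Idx S N, F ij.1 ij.2 := by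
  rw [Finset.sum_sigma']
  refine Finset.sum_bij' (fun a _ => (a.2, a.1 - a.2)) (fun a _ => ⟨a.1 + a.2, a.1⟩)
    ?_ ?_ ?_ ?_ fun _ _ => rfl
  · rintro ⟨k, i⟩ h
    obtain ⟨hk, hik⟩ : k ∈ Idx S N ∧ i ≤ k := by simpa using h
    simpa [add_tsub_cancel_of_le hik, hk] using
      And.intro (mem_Idx_of_le hik hk) (mem_Idx_of_le tsub_le_self hk)
  · rintro ⟨i, j⟩ h
    simpa using (Finset.mem_filter.1 h).2
  · rintro ⟨k, i⟩ h
    obtain ⟨-, hik⟩ : k ∈ Idx S N ∧ i ≤ k := by simpa using h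
    simp [add_tsub_cancel_of_le hik]
  · simp

omit [DecidableEq S]

theorem mfact_ne_zero (i : S → ℕ) : mfact i ≠ 0 :=
  Finset.prod_ne_zero_iff.2 fun s _ => (i s).factorial_ne_zero

theorem mchoose_mul_mfact_mul_mfact {i k : S → ℕ} (h : i ≤ k) :
    mchoose k i * mfact i * mfact (k - i) = mfact k := by
  simp only [mchoose, mfact, ← Finset.prod_mul_distrib]
  exact Finset.prod_congr rfl fun s _ => Nat.choose_mul_factorial_mul_factorial (h s)

end MultiIndex

namespace Setting

omit [DecidableEq S] [IsDomain O] [CompleteSpace E] [CharZero E]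

theorem isUltrametricDist (St : Setting S O E) : IsUltrametricDist E :=
  .isUltrametricDist_of_forall_norm_add_le_max_norm St.norm_add_max

theorem one_lt_q (St : Setting S O E) : 1 < St.q := by
  rw [St.hq]
  exact one_lt_pow₀ (mod_cast St.hp.one_lt) St.hfdeg.ne'

theorem q_pos (St : Setting S O E) : 0 < St.q :=
  zero_lt_one.trans St.one_lt_q

theorem ν_le_one (St : Setting S O E) (y : O) : St.ν y ≤ 1 := by
  simpa using (St.mem_ball_iff y 0).1 ⟨y, by simp⟩

theorem mpow_add (St : Setting S O E) (z : O) (i j : S → ℕ) :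
    mpow St z (i + j) = mpow St z i * mpow St z j := by
  simp [mpow, pow_add, Finset.prod_mul_distrib]

theorem mpow_zero_left (St : Setting S O E) {i : S → ℕ} (hi : i ≠ 0) : mpow St 0 i = 0 := by
  obtain ⟨s, hs⟩ := Function.ne_iff.1 hi
  exact Finset.prod_eq_zero (Finset.mem_univ s) (by rw [map_zero, zero_pow hs])

theorem norm_mpow_le_pow (St : Setting S O E) {y : O} {t : ℝ} (hy : St.ν y ≤ t) (i : S → ℕ) :
    ‖mpow St y i‖ ≤ t ^ wt i := by
  rw [mpow, wt, norm_prod, ← Finset.prod_pow_eq_pow_sum]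
  refine Finset.prod_le_prod (fun _ _ => norm_nonneg _) fun s _ => ?_
  rw [norm_pow]
  exact pow_le_pow_left₀ (norm_nonneg _) ((St.norm_emb s y).trans_le hy) _

theorem norm_mpow_le_one (St : Setting S O E) (y : O) (i : S → ℕ) : ‖mpow St y i‖ ≤ 1 := by
  simpa using St.norm_mpow_le_pow (St.ν_le_one y) i

end Setting

section Taylor

omit [IsDomain O] [CompleteSpace E] [CharZero E]

/-- The divided derivative `D_i f(x) / i!`, the `i`-th coefficient of the Taylor polynomial
at `x`. -/
def taylorCoeff (D : (S → ℕ) → O → E) (i : S → ℕ) (x : O) : E := D i x / (mfact i : E)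

/-- The Taylor polynomial `∑_{|i|≤N} D_i f(x) y^i / i!` at `x`, evaluated at the increment `y`. -/
def taylorPoly (St : Setting S O E) (N : ℕ) (D : (S → ℕ) → O → E) (x y : O) : E :=
  ∑ i ∈ Idx S N, taylorCoeff D i x * mpow St y i

theorem epsTay_eq_sub_taylorPoly (St : Setting S O E) (N : ℕ) (f : O → E)
    (D : (S → ℕ) → O → E) (x y : O) :
    epsTay St N f D x y = f (x + y) - taylorPoly St N D x y := by
  simp only [epsTay, taylorPoly, taylorCoeff, mul_div_right_comm]

theorem taylorPoly_zero_right (St : Setting S O E) (N : ℕ) (D : (S → ℕ) → O → E) (x : O) :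
    taylorPoly St N D x 0 = taylorCoeff D 0 x := by
  rw [taylorPoly, Finset.sum_eq_single_of_mem 0 (zero_mem_Idx N) fun i _ hi => by
    rw [St.mpow_zero_left hi, mul_zero]]
  simp [mpow]

theorem norm_taylorPoly_le (St : Setting S O E) {N : ℕ} {D : (S → ℕ) → O → E} {A : ℝ} {x : O}
    (hD : ∀ i ∈ Idx S N, ‖taylorCoeff D i x‖ ≤ A) (y : O) : ‖taylorPoly St N D x y‖ ≤ A := by
  have := St.isUltrametricDist
  refine IsUltrametricDist.norm_sum_le_of_forall_le_of_nonempty ⟨0, zero_mem_Idx N⟩ fun i hi => ?_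
  simpa using norm_mul_le_of_le (hD i hi) (St.norm_mpow_le_one y i)

theorem epsTay_mul (St : Setting S O E) (N : ℕ) (f g : O → E) (Df Dg D : (S → ℕ) → O → E)
    (x y : O) :
    epsTay St N (fun z => f z * g z) D x y =
      epsTay St N f Df x y * g (x + y) + taylorPoly St N Df x y * epsTay St N g Dg x y +
        (taylorPoly St N Df x y * taylorPoly St N Dg x y - taylorPoly St N D x y) := by
  simp only [epsTay_eq_sub_taylorPoly]
  ring

end Taylor

section Leibniz

omit [IsDomain O] [CompleteSpace E]

omit [DecidableEq S] in
theorem norm_le_of_norm_taylorCoeff_le {X : Type*} {D : (S → ℕ) → X → E} {i : S → ℕ} {x : X}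
    {C : ℝ} (h : ‖taylorCoeff D i x‖ ≤ C) : ‖D i x‖ ≤ C * ‖(mfact i : E)‖ := by
  have hne : (mfact i : E) ≠ 0 := Nat.cast_ne_zero.2 (mfact_ne_zero i)
  rwa [taylorCoeff, norm_div, div_le_iff₀ (norm_pos_iff.2 hne)] at h

/-- The family `k ↦ ∑_{i+j=k} (k choose i) D_i f · D_j g` of derivatives of a product `f g`. -/
def leibniz (Df Dg : (S → ℕ) → O → E) (k : S → ℕ) (x : O) : E :=
  ∑ i ∈ Finset.Iic k, (mchoose k i : E) * Df i x * Dg (k - i) x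

theorem taylorCoeff_leibniz {X : Type*} (Df Dg : (S → ℕ) → X → E) (k : S → ℕ) (x : X) :
    taylorCoeff (leibniz Df Dg) k x =
      ∑ i ∈ Finset.Iic k, taylorCoeff Df i x * taylorCoeff Dg (k - i) x := by
  rw [taylorCoeff, leibniz, Finset.sum_div]
  refine Finset.sum_congr rfl fun i hi => ?_
  have hfact : (mchoose k i : E) * mfact i * mfact (k - i) = mfact k :=
    mod_cast mchoose_mul_mfact_mul_mfact (Finset.mem_Iic.1 hi)
  have hne (j : S → ℕ) : (mfact j : E) ≠ 0 := Nat.cast_ne_zero.2 (mfact_ne_zero j)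
  rw [taylorCoeff, taylorCoeff, div_mul_div_comm, div_eq_div_iff (hne k)
    (mul_ne_zero (hne i) (hne (k - i))), ← hfact]
  ring

theorem norm_taylorCoeff_leibniz_le [IsUltrametricDist E] {X : Type*} {Df Dg : (S → ℕ) → X → E}
    {N : ℕ} {A B : ℝ} {x : X} (hDf : ∀ i ∈ Idx S N, ‖taylorCoeff Df i x‖ ≤ A)
    (hDg : ∀ i ∈ Idx S N, ‖taylorCoeff Dg i x‖ ≤ B) {k : S → ℕ} (hk : k ∈ Idx S N) :
    ‖taylorCoeff (leibniz Df Dg) k x‖ ≤ A * B := by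
  rw [taylorCoeff_leibniz]
  refine IsUltrametricDist.norm_sum_le_of_forall_le_of_nonempty ⟨0, by simp⟩ fun i hi => ?_
  exact norm_mul_le_of_le (hDf i (mem_Idx_of_le (Finset.mem_Iic.1 hi) hk))
    (hDg (k - i) (mem_Idx_of_le tsub_le_self hk))

theorem taylorPoly_mul_sub_taylorPoly_leibniz (St : Setting S O E) (N : ℕ)
    (Df Dg : (S → ℕ) → O → E) (x y : O) :
    taylorPoly St N Df x y * taylorPoly St N Dg x y - taylorPoly St N (leibniz Df Dg) x y =
      ∑ ij ∈ Idx S N ×ˢ Idx S N with ij.1 + ij.2 ∉ Idx S N,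
        taylorCoeff Df ij.1 x * taylorCoeff Dg ij.2 x * mpow St y (ij.1 + ij.2) := by
  have hlow : taylorPoly St N (leibniz Df Dg) x y =
      ∑ ij ∈ Idx S N ×ˢ Idx S N with ij.1 + ij.2 ∈ Idx S N,
        taylorCoeff Df ij.1 x * taylorCoeff Dg ij.2 x * mpow St y (ij.1 + ij.2) := by
    rw [taylorPoly, ← sum_Idx_sum_Iic N fun i j =>
      taylorCoeff Df i x * taylorCoeff Dg j x * mpow St y (i + j)]
    refine Finset.sum_congr rfl fun k _ => ?_
    rw [taylorCoeff_leibniz, Finset.sum_mul]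
    refine Finset.sum_congr rfl fun i hi => ?_
    rw [add_tsub_cancel_of_le (Finset.mem_Iic.1 hi)]
  have hall : taylorPoly St N Df x y * taylorPoly St N Dg x y =
      ∑ ij ∈ Idx S N ×ˢ Idx S N,
        taylorCoeff Df ij.1 x * taylorCoeff Dg ij.2 x * mpow St y (ij.1 + ij.2) := by
    simp only [taylorPoly, Finset.sum_mul_sum, Finset.sum_product, St.mpow_add, mul_mul_mul_comm]
  rw [hlow, hall, sub_eq_iff_eq_add', Finset.sum_filter_add_sum_filter_not]

theorem norm_taylorPoly_mul_sub_taylorPoly_leibniz_le (St : Setting S O E) {N : ℕ}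
    {Df Dg : (S → ℕ) → O → E} {A B t : ℝ} {x y : O}
    (hDf : ∀ i ∈ Idx S N, ‖taylorCoeff Df i x‖ ≤ A)
    (hDg : ∀ i ∈ Idx S N, ‖taylorCoeff Dg i x‖ ≤ B)
    (ht₀ : 0 ≤ t) (ht₁ : t ≤ 1) (hy : St.ν y ≤ t) :
    ‖taylorPoly St N Df x y * taylorPoly St N Dg x y - taylorPoly St N (leibniz Df Dg) x y‖ ≤
      A * B * t ^ (N + 1) := by
  have := St.isUltrametricDist
  have hA : 0 ≤ A := (norm_nonneg _).trans (hDf 0 (zero_mem_Idx N))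
  have hB : 0 ≤ B := (norm_nonneg _).trans (hDg 0 (zero_mem_Idx N))
  rw [taylorPoly_mul_sub_taylorPoly_leibniz]
  refine IsUltrametricDist.norm_sum_le_of_forall_le_of_nonneg (by positivity) fun ij hij => ?_
  obtain ⟨⟨hi, hj⟩, hdeg⟩ : (ij.1 ∈ Idx S N ∧ ij.2 ∈ Idx S N) ∧ N < wt (ij.1 + ij.2) := by
    simpa [mem_Idx] using hij
  exact norm_mul_le_of_le (norm_mul_le_of_le (hDf _ hi) (hDg _ hj))
    ((St.norm_mpow_le_pow hy _).trans (pow_le_pow_of_le_one ht₀ ht₁ hdeg))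

end Leibniz

section ClassCr

open Asymptotics Filter

omit [IsDomain O] [CompleteSpace E] [CharZero E]

variable {St : Setting S O E} {r : ℝ} {f : O → E} {D : (S → ℕ) → O → E}

theorem isCrWith_iff_isLittleO :
    IsCrWith St r f D ↔ (∀ i ∈ Idx S ⌊r⌋₊, ∃ C : ℝ, ∀ x, ‖D i x‖ ≤ C) ∧
      (fun p : ℕ × O × O => epsTay St ⌊r⌋₊ f D p.2.1 (St.ϖ ^ p.1 * p.2.2))
        =o[atTop ×ˢ ⊤] fun p => (St.q ^ (-r)) ^ p.1 := by
  have hq := St.q_pos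
  have hpow (h : ℕ) : ‖(St.q ^ (-r)) ^ h‖ = (St.q ^ (r * h))⁻¹ := by
    rw [Real.norm_of_nonneg (by positivity), ← Real.rpow_mul_natCast hq.le, neg_mul,
      Real.rpow_neg hq.le]
  rw [IsCrWith, isLittleO_iff]
  refine and_congr_right fun _ => forall₂_congr fun ε _ => ?_
  rw [Filter.Eventually, mem_prod_top]
  simp only [hpow, ← div_eq_mul_inv, le_div_iff₀ (Real.rpow_pos_of_pos hq _), Set.mem_ofPred_eq,
    Prod.forall, ← eventually_iff, eventually_atTop]

namespace IsCrWith

theorem epsTay_eq_zero (hf : IsCrWith St r f D) (hr : 0 ≤ r) (x : O) {y : O}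
    (hy : ∀ n : ℕ, St.ϖ ^ n ∣ y) : epsTay St ⌊r⌋₊ f D x y = 0 := by
  refine norm_le_zero_iff.1 (le_of_forall_pos_le_add fun ε hε => ?_)
  obtain ⟨M, hM⟩ := hf.2 ε hε
  obtain ⟨z, rfl⟩ := hy M
  have hq : 1 ≤ St.q ^ (r * (M : ℝ)) := Real.one_le_rpow St.one_lt_q.le (by positivity)
  rw [zero_add]
  exact (le_mul_of_one_le_right (norm_nonneg _) hq).trans (hM M le_rfl x z)

theorem taylorCoeff_zero (hf : IsCrWith St r f D) (hr : 0 ≤ r) (x : O) :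
    taylorCoeff D 0 x = f x := by
  have h := hf.epsTay_eq_zero hr x fun n => dvd_zero (St.ϖ ^ n)
  rw [epsTay_eq_sub_taylorPoly, taylorPoly_zero_right, add_zero, sub_eq_zero] at h
  exact h.symm

theorem exists_norm_taylorCoeff_le (hf : IsCrWith St r f D) :
    ∃ C : ℝ, ∀ i ∈ Idx S ⌊r⌋₊, ∀ x, ‖taylorCoeff D i x‖ ≤ C := by
  choose! C hC using hf.1
  obtain ⟨M, hM⟩ := ((Idx S ⌊r⌋₊).image fun i => C i / ‖(mfact i : E)‖).exists_le
  refine ⟨M, fun i hi x => le_trans ?_ (hM _ (Finset.mem_image_of_mem _ hi))⟩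
  rw [taylorCoeff, norm_div]
  exact div_le_div_of_nonneg_right (hC i hi x) (norm_nonneg _)

theorem exists_norm_epsTay_le (hf : IsCrWith St r f D) (hr : 0 ≤ r) :
    ∃ C : ℝ, ∀ x y, ‖epsTay St ⌊r⌋₊ f D x y‖ ≤ C := by
  have := St.isUltrametricDist
  obtain ⟨C, hC⟩ := hf.exists_norm_taylorCoeff_le
  refine ⟨C, fun x y => ?_⟩
  rw [epsTay_eq_sub_taylorPoly, ← hf.taylorCoeff_zero hr, sub_eq_add_neg]
  refine (IsUltrametricDist.norm_add_le_max _ _).trans (max_le (hC 0 (zero_mem_Idx _) _) ?_)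
  rw [norm_neg]
  exact norm_taylorPoly_le St (fun i hi => hC i hi x) y

theorem exists_norm_epsTay_le_pow (hf : IsCrWith St r f D) (hr : 0 ≤ r) :
    ∃ C : ℝ, 0 ≤ C ∧ ∀ (h : ℕ) (x z : O),
      ‖epsTay St ⌊r⌋₊ f D x (St.ϖ ^ h * z)‖ ≤ C * (St.q ^ (-r)) ^ h := by
  have hq := St.q_pos
  have hq₁ : St.q ^ (-r) ≤ 1 :=
    Real.rpow_le_one_of_one_le_of_nonpos St.one_lt_q.le (neg_nonpos.2 hr)
  obtain ⟨C, hC⟩ := hf.exists_norm_epsTay_le hr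
  obtain ⟨M, hM⟩ := eventually_atTop.1
    (mem_prod_top.1 (isLittleO_iff.1 (isCrWith_iff_isLittleO.1 hf).2 one_pos))
  refine ⟨max 1 (C / (St.q ^ (-r)) ^ M), by positivity, fun h x z => ?_⟩
  obtain hMh | hhM := le_or_gt M h
  · have hsmall : ‖epsTay St ⌊r⌋₊ f D x (St.ϖ ^ h * z)‖ ≤ 1 * (St.q ^ (-r)) ^ h := by
      simpa [Real.norm_of_nonneg (Real.rpow_nonneg hq.le (-r))] using hM h hMh (x, z)
    exact hsmall.trans (by gcongr; exact le_max_left _ _)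
  · calc ‖epsTay St ⌊r⌋₊ f D x (St.ϖ ^ h * z)‖
        ≤ C / (St.q ^ (-r)) ^ M * (St.q ^ (-r)) ^ M := by
          rw [div_mul_cancel₀ _ (by positivity)]
          exact hC _ _
      _ ≤ max 1 (C / (St.q ^ (-r)) ^ M) * (St.q ^ (-r)) ^ h :=
          mul_le_mul (le_max_right _ _) (pow_le_pow_of_le_one (by positivity) hq₁ hhM.le)
            (by positivity) (by positivity)

theorem exists_norm_epsTay_le_rpow (hf : IsCrWith St r f D) (hr : 0 ≤ r) :
    ∃ C : ℝ, 0 ≤ C ∧ ∀ x y : O, 0 < St.ν y → ‖epsTay St ⌊r⌋₊ f D x y‖ ≤ C * St.ν y ^ r := by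
  have hq := St.q_pos
  obtain ⟨C, hC₀, hC⟩ := hf.exists_norm_epsTay_le_pow hr
  refine ⟨C * St.q ^ r, by positivity, fun x y hy => ?_⟩
  obtain ⟨n, hlt, hle⟩ := exists_nat_pow_near_of_lt_one hy (St.ν_le_one y) (inv_pos.2 hq)
    (inv_lt_one_of_one_lt₀ St.one_lt_q)
  obtain ⟨z, rfl⟩ := (St.mem_ball_iff y n).2 hle
  calc ‖epsTay St ⌊r⌋₊ f D x (St.ϖ ^ n * z)‖ ≤ C * (St.q ^ (-r)) ^ n := hC n x z
    _ = C * St.q ^ r * (St.q⁻¹ ^ (n + 1)) ^ r := by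
        rw [← Real.rpow_pow_comm (by positivity), Real.inv_rpow hq.le, ← Real.rpow_neg hq.le,
          pow_succ', ← mul_assoc, mul_assoc C, ← Real.rpow_add hq, add_neg_cancel, Real.rpow_zero,
          mul_one]
    _ ≤ C * St.q ^ r * St.ν (St.ϖ ^ n * z) ^ r := by gcongr

theorem epsTay_eq_zero_of_ν_nonpos (hf : IsCrWith St r f D) (hr : 0 ≤ r) (x : O) {y : O}
    (hy : St.ν y ≤ 0) : epsTay St ⌊r⌋₊ f D x y = 0 :=
  hf.epsTay_eq_zero hr x fun n => (St.mem_ball_iff y n).2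
    (hy.trans (pow_nonneg (inv_nonneg.2 St.q_pos.le) n))

theorem crNorm_le_iff (hf : IsCrWith St r f D) (hr : 0 ≤ r) {a : ℝ} :
    CrNorm St r f D ≤ a ↔ (∀ i ∈ Idx S ⌊r⌋₊, ∀ x, ‖taylorCoeff D i x‖ ≤ a) ∧
      ∀ x y, 0 < St.ν y → ‖epsTay St ⌊r⌋₊ f D x y‖ ≤ a * St.ν y ^ r := by
  have : Nonempty (Idx S ⌊r⌋₊) := ⟨⟨0, zero_mem_Idx _⟩⟩
  obtain ⟨C₁, hC₁⟩ := hf.exists_norm_taylorCoeff_le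
  obtain ⟨C₂, hC₂₀, hC₂⟩ := hf.exists_norm_epsTay_le_rpow hr
  have hquot {b : ℝ} (hb : 0 ≤ b) (x y : O) : ‖epsTay St ⌊r⌋₊ f D x y‖ / St.ν y ^ r ≤ b ↔
      (0 < St.ν y → ‖epsTay St ⌊r⌋₊ f D x y‖ ≤ b * St.ν y ^ r) := by
    obtain hy | hy := le_or_gt (St.ν y) 0
    · simp [hf.epsTay_eq_zero_of_ν_nonpos hr x hy, hb, hy.not_gt]
    · simp [div_le_iff₀ (Real.rpow_pos_of_pos hy r), hy]
  change max (⨆ i : Idx S ⌊r⌋₊, ⨆ x, ‖taylorCoeff D i x‖)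
    (⨆ x, ⨆ y, ‖epsTay St ⌊r⌋₊ f D x y‖ / St.ν y ^ r) ≤ a ↔ _
  rw [max_le_iff,
    ciSup_ciSup_le_iff fun (i : Idx S ⌊r⌋₊) (x : O) => hC₁ i i.2 x,
    ciSup_ciSup_le_iff fun x y => (hquot hC₂₀ x y).2 (hC₂ x y), Subtype.forall]
  refine and_congr_right fun hcoeff => ?_
  have ha : 0 ≤ a := (norm_nonneg _).trans (hcoeff 0 (zero_mem_Idx _) 0)
  exact forall₂_congr (hquot ha)

end IsCrWith

end ClassCr

section Product

open Asymptotics Filter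

omit [IsDomain O] [CompleteSpace E]

variable {St : Setting S O E} {r : ℝ} {f g : O → E} {Df Dg : (S → ℕ) → O → E}

theorem IsCrWith.isLittleO_taylorPoly_mul_sub_taylorPoly_leibniz (hf : IsCrWith St r f Df)
    (hg : IsCrWith St r g Dg) :
    (fun p : ℕ × O × O =>
      taylorPoly St ⌊r⌋₊ Df p.2.1 (St.ϖ ^ p.1 * p.2.2) *
        taylorPoly St ⌊r⌋₊ Dg p.2.1 (St.ϖ ^ p.1 * p.2.2) -
        taylorPoly St ⌊r⌋₊ (leibniz Df Dg) p.2.1 (St.ϖ ^ p.1 * p.2.2))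
      =o[atTop ×ˢ ⊤] fun p => (St.q ^ (-r)) ^ p.1 := by
  have hq := St.q_pos
  obtain ⟨A, hA⟩ := hf.exists_norm_taylorCoeff_le
  obtain ⟨B, hB⟩ := hg.exists_norm_taylorCoeff_le
  have hbase : St.q⁻¹ ^ (⌊r⌋₊ + 1) < St.q ^ (-r) := by
    rw [inv_pow, ← Real.rpow_natCast, ← Real.rpow_neg hq.le, Nat.cast_succ]
    exact Real.rpow_lt_rpow_of_exponent_lt St.one_lt_q (neg_lt_neg (Nat.lt_floor_add_one r))
  have hpow : (fun p : ℕ × O × O => (St.q⁻¹ ^ (⌊r⌋₊ + 1)) ^ p.1)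
      =o[atTop ×ˢ ⊤] fun p => (St.q ^ (-r)) ^ p.1 :=
    (isLittleO_pow_pow_of_lt_left (by positivity) hbase).comp_tendsto tendsto_fst
  refine (isBigO_of_le' (c := A * B) _ fun p => ?_).trans_isLittleO hpow
  rw [Real.norm_of_nonneg (by positivity), pow_right_comm]
  exact norm_taylorPoly_mul_sub_taylorPoly_leibniz_le St (fun i hi => hA i hi _)
    (fun i hi => hB i hi _) (by positivity)
    (pow_le_one₀ (by positivity) (inv_le_one_of_one_le₀ St.one_lt_q.le))
    ((St.mem_ball_iff _ p.1).1 ⟨_, rfl⟩)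

theorem IsCrWith.mul (hf : IsCrWith St r f Df) (hg : IsCrWith St r g Dg) (hr : 0 ≤ r) :
    IsCrWith St r (fun z => f z * g z) (leibniz Df Dg) := by
  have := St.isUltrametricDist
  obtain ⟨A, hA⟩ := hf.exists_norm_taylorCoeff_le
  obtain ⟨B, hB⟩ := hg.exists_norm_taylorCoeff_le
  refine isCrWith_iff_isLittleO.2 ⟨fun k hk => ⟨A * B * ‖(mfact k : E)‖, fun x =>
    norm_le_of_norm_taylorCoeff_le <| norm_taylorCoeff_leibniz_le (fun i hi => hA i hi x)
      (fun i hi => hB i hi x) hk⟩, ?_⟩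
  simp only [epsTay_mul St _ f g Df Dg]
  have hgO : (fun p : ℕ × O × O => g (p.2.1 + St.ϖ ^ p.1 * p.2.2))
      =O[atTop ×ˢ ⊤] fun _ => (1 : ℝ) :=
    isBigO_of_le' (c := B) _ fun p => by
      simpa [hg.taylorCoeff_zero hr] using
        hB 0 (zero_mem_Idx _) (p.2.1 + St.ϖ ^ p.1 * p.2.2)
  have hTf : (fun p : ℕ × O × O => taylorPoly St ⌊r⌋₊ Df p.2.1 (St.ϖ ^ p.1 * p.2.2))
      =O[atTop ×ˢ ⊤] fun _ => (1 : ℝ) :=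
    isBigO_of_le' (c := A) _ fun p => by
      simpa using norm_taylorPoly_le St (fun i hi => hA i hi p.2.1) (St.ϖ ^ p.1 * p.2.2)
  refine .add (.add ?_ ?_) (hf.isLittleO_taylorPoly_mul_sub_taylorPoly_leibniz hg)
  · simpa using (isCrWith_iff_isLittleO.1 hf).2.mul_isBigO hgO
  · simpa using hTf.mul_isLittleO (isCrWith_iff_isLittleO.1 hg).2

theorem IsCrWith.crNorm_mul_le (hf : IsCrWith St r f Df) (hg : IsCrWith St r g Dg) (hr : 0 ≤ r) :
    CrNorm St r (fun z => f z * g z) (leibniz Df Dg) ≤ CrNorm St r f Df * CrNorm St r g Dg := by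
  have := St.isUltrametricDist
  obtain ⟨hA, hεf⟩ := (hf.crNorm_le_iff hr).1 le_rfl
  obtain ⟨hB, hεg⟩ := (hg.crNorm_le_iff hr).1 le_rfl
  set A := CrNorm St r f Df
  set B := CrNorm St r g Dg
  have hA₀ : 0 ≤ A := (norm_nonneg _).trans (hA 0 (zero_mem_Idx _) 0)
  have hB₀ : 0 ≤ B := (norm_nonneg _).trans (hB 0 (zero_mem_Idx _) 0)
  refine ((hf.mul hg hr).crNorm_le_iff hr).2 ⟨fun k hk x => norm_taylorCoeff_leibniz_le
    (fun i hi => hA i hi x) (fun i hi => hB i hi x) hk, fun x y hy => ?_⟩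
  have hgB : ‖g (x + y)‖ ≤ B := hg.taylorCoeff_zero hr (x + y) ▸ hB 0 (zero_mem_Idx _) _
  have hTf : ‖taylorPoly St ⌊r⌋₊ Df x y‖ ≤ A := norm_taylorPoly_le St (fun i hi => hA i hi x) y
  have hcross := norm_taylorPoly_mul_sub_taylorPoly_leibniz_le St (fun i hi => hA i hi x)
    (fun i hi => hB i hi x) hy.le (St.ν_le_one y) le_rfl
  have hpow : St.ν y ^ (⌊r⌋₊ + 1) ≤ St.ν y ^ r := by
    rw [← Real.rpow_natCast, Nat.cast_succ]
    exact Real.rpow_le_rpow_of_exponent_ge hy (St.ν_le_one y) (Nat.lt_floor_add_one r).le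
  rw [epsTay_mul St _ f g Df Dg]
  refine (IsUltrametricDist.norm_add_le_max _ _).trans (max_le
    ((IsUltrametricDist.norm_add_le_max _ _).trans (max_le ?_ ?_)) ?_)
  · exact (norm_mul_le_of_le (hεf x y hy) hgB).trans_eq (by ring)
  · exact (norm_mul_le_of_le hTf (hεg x y hy)).trans_eq (by ring)
  · exact hcross.trans (by gcongr)

theorem statement6_general (St : Setting S O E) (r : ℝ) (hr : 0 ≤ r)
    (f g : O → E) (Df Dg : (S → ℕ) → O → E)
    (hf : IsCrWith St r f Df) (hg : IsCrWith St r g Dg) :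
    ∃ Dfg : (S → ℕ) → O → E,
      IsCrWith St r (fun z => f z * g z) Dfg ∧
      CrNorm St r (fun z => f z * g z) Dfg ≤ CrNorm St r f Df * CrNorm St r g Dg ∧
      ∀ k ∈ Idx S ⌊r⌋₊, ∀ x : O,
        Dfg k x = ∑ i ∈ Finset.Iic k, (mchoose k i : E) * Df i x * Dg (k - i) x :=
  ⟨leibniz Df Dg, hf.mul hg hr, hf.crNorm_mul_le hg hr, fun _ _ _ => rfl⟩

end Product

/-- `C^r(O,E)` is an `E`-Banach algebra: `fg ∈ C^r`, with
`‖fg‖_{C^r} ≤ ‖f‖_{C^r} ‖g‖_{C^r}` and `D_k(fg) = ∑_{i+j=k} (k choose i) D_i f · D_j g`. -/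
theorem statement6 (St : Setting S O E) (r : ℝ) (hr : 0 ≤ r)
    (f g : O → E) (Df Dg : (S → ℕ) → O → E)
    (hf : IsCrWith St r f Df) (hg : IsCrWith St r g Dg) :
    ∃ Dfg : (S → ℕ) → O → E,
      IsCrWith St r (fun z => f z * g z) Dfg ∧
      CrNorm St r (fun z => f z * g z) Dfg ≤ CrNorm St r f Df * CrNorm St r g Dg ∧
      ∀ k ∈ Idx S ⌊r⌋₊, ∀ x : O,
        Dfg k x = ∑ i ∈ Finset.Iic k, (mchoose k i : E) * Df i x * Dg (k - i) x :=
  statement6_general St r hr f g Df Dg hf hg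

end CrPaper
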